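/- Let $U$ be a noetherian scheme and let $p : \mathcal{A} \to U$ be an abelian scheme, that is, a group scheme over $U$ whose structure morphism $p$ is smooth and proper with geometrically connected fibers. Let $\alpha : \mathcal{A} \times_U \mathcal{A} \to \mathcal{A}$ be its addition and $0_p : U \to \mathcal{A}$ its zero-section. Let $X$ be a closed subscheme of $\mathcal{A}$ such that $\alpha(X \times_U X) \subseteq X$ and $0_p(U) \subseteq X$, meaning that the restriction of $\alpha$ to $X \times_U X$ and the morphism $0_p$ both factor through the inclusion $X \hookrightarrow \mathcal{A}$. Then $-X = X$ as closed subschemes of $\mathcal{A}$, where $-X$ is the image of $X$ under the inversion morphism of $\mathcal{A}$. Consequently $p|_X : X \to U$ is a closed subgroup scheme of $p$, i.e. $\alpha(X \times_U X) \subseteq X$, $0_p(U) \subseteq X$ and $-X = X$. -/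

import Mathlib

open CategoryTheory Limits MonoidalCategory CartesianMonoidalCategory MonObj AlgebraicGeometry

universe u

/-- A group scheme `A` over `U` (a group object of the category of `U`-schemes, whose product is
the fiber product over `U`) is an abelian scheme if its structure morphism `p = A.hom` is smooth and
proper and has geometrically connected fibers. The group laws are part of `GrpObj A`. -/
class IsAbelianScheme {U : Scheme.{u}} (A : Over U) [GrpObj A] : Prop where
  smooth : Smooth A.hom
  proper : IsProper A.hom
  geometricallyConnected : GeometricallyConnected A.hom

namespace GroupScheme

variable {U : Scheme.{u}} {A : Over U}

/-- The closed subscheme `X` of `A` cut out by the quasi-coherent sheaf of ideals `X`, seen as a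
`U`-scheme through the restriction `p|_X : X ⟶ U` of the structure morphism `p` of `A`. -/
noncomputable abbrev sub (X : A.left.IdealSheafData) : Over U :=
  Over.mk (X.subschemeι ≫ A.hom)

/-- The inclusion `X ⟶ A` as a morphism of `U`-schemes. -/
noncomputable abbrev incl (X : A.left.IdealSheafData) : sub X ⟶ A :=
  Over.homMk X.subschemeι

/-- The (scheme-theoretic) image of a morphism of `U`-schemes `f : T ⟶ A` is contained in `X`:
`f` factors through the inclusion of `X` into `A`. -/
def MapsInto {T : Over U} (f : T ⟶ A) (X : A.left.IdealSheafData) : Prop :=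
  ∃ g : T ⟶ sub X, g ≫ incl X = f

variable [GrpObj A]

/-- `α(X ×_U X) ⊆ X`, for the group law `α = μ : A ×_U A ⟶ A`. -/
def AddClosed (X : A.left.IdealSheafData) : Prop :=
  MapsInto ((incl X ⊗ₘ incl X) ≫ μ[A]) X

/-- `0_p(U) ⊆ X`, for the zero-section `0_p = η : U ⟶ A`. -/
def ContainsZero (X : A.left.IdealSheafData) : Prop :=
  MapsInto η[A] X

/-- `-X`, the scheme-theoretic image of `X` under the inversion morphism `ι : A ⟶ A`, that is, the
closed subscheme cut out by the kernel of the composite `X ⟶ A ⟶ A`. -/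
noncomputable def negSub (X : A.left.IdealSheafData) : A.left.IdealSheafData :=
  X.map (GrpObj.inv (X := A)).left

/-- `p|_X : X ⟶ U` is a closed subgroup scheme of the group scheme `p : A ⟶ U`. -/
structure IsClosedSubgroupScheme (X : A.left.IdealSheafData) : Prop where
  add_closed : AddClosed X
  contains_zero : ContainsZero X
  neg_eq : negSub X = X

end GroupScheme

namespace AlgebraicGeometry

/-- The quasi-coherent ideal sheaves on a noetherian scheme satisfy the ascending chain
condition. -/
instance Scheme.IdealSheafData.wellFoundedGT (Z : Scheme.{u}) [IsNoetherian Z] :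
    WellFoundedGT Z.IdealSheafData := by
  obtain ⟨s, hs, hsU⟩ := isCompact_iff_finite_and_eq_biUnion_affineOpens (X := Z) (U := ⊤) |>.mp
    isCompact_univ
  have := hs.to_subtype
  have hcov : ⨆ i : s, (i : Z.affineOpens).1 = ⊤ := by
    rw [hsU, iSup_subtype]
  have (i : s) : IsNoetherianRing Γ(Z, (i : Z.affineOpens).1) :=
    IsLocallyNoetherian.component_noetherian _
  let φ (I : Z.IdealSheafData) (i : s) : (Ideal Γ(Z, (i : Z.affineOpens).1))ᵒᵈ :=
    OrderDual.toDual (I.ideal i)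
  have hφ : StrictAnti φ := Antitone.strictAnti_of_injective (fun _ _ h i ↦ h i)
    fun I J h ↦ ext_of_iSup_eq_top _ hcov (congrFun h)
  exact hφ.wellFoundedGT

/-- A closed immersion of a noetherian scheme into itself is an isomorphism. -/
theorem IsClosedImmersion.isIso_of_isNoetherian {Z : Scheme.{u}} [IsNoetherian Z] (f : Z ⟶ Z)
    [IsClosedImmersion f] : IsIso f := by
  let g (n : ℕ) : Z ⟶ Z := (f ≫ ·)^[n] (𝟙 Z)
  have hsucc (n : ℕ) : g (n + 1) = f ≫ g n := Function.iterate_succ_apply' _ _ _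
  have hg (n : ℕ) : IsClosedImmersion (g n) := by
    induction n with
    | zero => exact inferInstanceAs (IsClosedImmersion (𝟙 Z))
    | succ n ih => rw [hsucc]; infer_instance
  obtain ⟨n, hn⟩ := WellFoundedGT.monotone_chain_condition
    ⟨fun n ↦ (g n).ker, monotone_nat_of_le_succ fun n ↦ by
      rw [hsucc]; exact Scheme.Hom.le_ker_comp _ _⟩
  exact isIso_of_ker_eq (g (n + 1)) (g n) f (hsucc n).symm (hn (n + 1) n.le_succ).symm

end AlgebraicGeometry

namespace GroupScheme

variable {U : Scheme.{u}} {A : Over U}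

theorem isClosedImmersion_tensorHom_left {R S T V : Over U} (f : R ⟶ S) (g : T ⟶ V)
    [IsClosedImmersion f.left] [IsClosedImmersion g.left] :
    IsClosedImmersion (f ⊗ₘ g).left := by
  rw [Over.tensorHom_left]
  have : MorphismProperty.IsStableUnderComposition @IsClosedImmersion.{u} :=
    MorphismProperty.IsMultiplicative.toIsStableUnderComposition
  exact MorphismProperty.pullbackMap (P := @IsClosedImmersion) ‹_› ‹_› (Over.w f).symm
    (Over.w g).symm

theorem isNoetherian_tensorObj_left [AlgebraicGeometry.IsNoetherian U] (S T : Over U)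
    [LocallyOfFiniteType S.hom] [QuasiCompact S.hom] [LocallyOfFiniteType T.hom]
    [QuasiCompact T.hom] : AlgebraicGeometry.IsNoetherian (S ⊗ T).left := by
  have : LocallyOfFiniteType (S ⊗ T).hom := by rw [Over.tensorObj_hom]; infer_instance
  have : QuasiCompact (S ⊗ T).hom := by rw [Over.tensorObj_hom]; infer_instance
  exact { LocallyOfFiniteType.isLocallyNoetherian (S ⊗ T).hom with
    toCompactSpace := QuasiCompact.compactSpace_of_compactSpace (S ⊗ T).hom }

section Shear

variable {C : Type*} [Category C] [CartesianMonoidalCategory C]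

/-- The automorphism `(x, y) ↦ (x, x + y)` of `G × G`. -/
def shear (G : C) [GrpObj G] : G ⊗ G ≅ G ⊗ G where
  hom := lift (fst G G) μ
  inv := lift (fst G G) (lift (fst G G ≫ GrpObj.inv) (snd G G) ≫ μ)
  hom_inv_id := by
    ext
    · simp
    · simpa [comp_lift_assoc] using
        ((GrpObj.eq_lift_inv_left (snd G G) (fst G G) μ).mpr (by simp)).symm
  inv_hom_id := by
    ext
    · simp
    · simpa using (GrpObj.eq_lift_inv_left _ (fst G G) (snd G G)).mp rfl

end Shear

variable [GrpObj A]

/-- If `X` is stable under addition and contains zero, then the restriction of the inversion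
to `X` factors through `X`. -/
theorem mapsInto_inv [AlgebraicGeometry.IsNoetherian U] [LocallyOfFiniteType A.hom]
    [QuasiCompact A.hom] (X : A.left.IdealSheafData) (hadd : AddClosed X)
    (hzero : ContainsZero X) : MapsInto (incl X ≫ GrpObj.inv) X := by
  obtain ⟨m, hm⟩ := hadd
  obtain ⟨e, he⟩ := hzero
  have : IsClosedImmersion (incl X).left := inferInstanceAs (IsClosedImmersion X.subschemeι)
  have : LocallyOfFiniteType (sub X).hom :=
    inferInstanceAs (LocallyOfFiniteType (X.subschemeι ≫ A.hom))
  have : QuasiCompact (sub X).hom := inferInstanceAs (QuasiCompact (X.subschemeι ≫ A.hom))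
  have := isNoetherian_tensorObj_left (sub X) (sub X)
  have := isClosedImmersion_tensorHom_left (incl X) (incl X)
  let σ : sub X ⊗ sub X ⟶ sub X ⊗ sub X := lift (fst _ _) m
  have hσ : σ ≫ (incl X ⊗ₘ incl X) = (incl X ⊗ₘ incl X) ≫ (shear A).hom := by
    ext1 <;> simp [σ, shear, hm]
  have : IsClosedImmersion (σ.left ≫ (incl X ⊗ₘ incl X).left) := by
    rw [← Over.comp_left, hσ, Over.comp_left]
    have : IsIso (shear A).hom.left := inferInstanceAs (IsIso ((Over.forget U).map (shear A).hom))
    infer_instance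
  have := IsClosedImmersion.of_comp_isClosedImmersion σ.left (incl X ⊗ₘ incl X).left
  have := IsClosedImmersion.isIso_of_isNoetherian σ.left
  have : IsIso σ := @isIso_of_reflects_iso _ _ _ _ _ _ σ (Over.forget U) this _
  let y : sub X ⟶ sub X ⊗ sub X := lift (𝟙 _) (toUnit _ ≫ e) ≫ inv σ
  have hy : y ≫ σ = lift (𝟙 _) (toUnit _ ≫ e) := by simp [y]
  have h₁ : y ≫ fst _ _ = 𝟙 _ := by simpa [σ] using congr($hy ≫ fst _ _)
  have h₂ : y ≫ m = toUnit _ ≫ e := by simpa [σ] using congr($hy ≫ snd _ _)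
  refine ⟨y ≫ snd _ _, ?_⟩
  have h₃ : lift (incl X) ((y ≫ snd _ _) ≫ incl X) ≫ μ = toUnit _ ≫ η[A] := by
    have : y ≫ (incl X ⊗ₘ incl X) = lift (incl X) ((y ≫ snd _ _) ≫ incl X) := by
      ext1 <;> simp [reassoc_of% h₁]
    rw [← this, Category.assoc, ← hm, reassoc_of% h₂, he]
  rw [(GrpObj.eq_lift_inv_left _ _ _).mpr h₃, MonObj.lift_comp_one_right]

theorem negSub_eq_of_mapsInto_inv (X : A.left.IdealSheafData)
    (h : MapsInto (incl X ≫ GrpObj.inv) X) : negSub X = X := by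
  obtain ⟨g, hg⟩ := h
  have hle : X ≤ negSub X := by
    rw [negSub, Scheme.IdealSheafData.map]
    have := congr(($hg).left)
    simp only [Over.comp_left, Over.homMk_left] at this
    rw [← this]
    exact X.ker_subschemeι.symm.le.trans (Scheme.Hom.le_ker_comp _ _)
  refine le_antisymm ?_ hle
  have hinv : (GrpObj.inv (X := A)).left ≫ (GrpObj.inv (X := A)).left = 𝟙 _ := by
    rw [← Over.comp_left, GrpObj.inv_comp_inv, Over.id_left]
  calc negSub X ≤ negSub (negSub X) := Scheme.IdealSheafData.map_mono _ hle
    _ = X := by simp [negSub, ← Scheme.IdealSheafData.map_comp, hinv]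

end GroupScheme

theorem neg_eq_self_of_add_zero_closed {U : Scheme.{u}} [AlgebraicGeometry.IsNoetherian U]
    (A : Over U) [GrpObj A] [IsAbelianScheme A] (X : A.left.IdealSheafData)
    (hadd : GroupScheme.AddClosed X) (hzero : GroupScheme.ContainsZero X) :
    GroupScheme.negSub X = X ∧ GroupScheme.IsClosedSubgroupScheme X := by
  have := IsAbelianScheme.proper (A := A)
  have h := GroupScheme.negSub_eq_of_mapsInto_inv X (GroupScheme.mapsInto_inv X hadd hzero)
  exact ⟨h, hadd, hzero, h⟩
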